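/- For a smooth function ψ : ℝ³ → ℝ define ζ := ψ_xx + ψ_yy, σ := ψ_xxx − 3ψ_xyy, ς := 3ψ_xxy − ψ_yyy and W(ψ) := (σ² + ς²)/(ζ_x² + ζ_y²), wherever the denominator is nonzero. Then W is invariant under each of the following transformations, i.e., W(ψ̃) at (t,x,y) equals W(ψ) at the corresponding source point: (a) ψ̃(t,x,y) = e^{−ε}ψ(e^{−ε}t,x,y); (b) ψ̃(t,x,y) = e^{2ε}ψ(t,e^{−ε}x,e^{−ε}y); (c) ψ̃(t,x,y) = ψ(t, x cos(θ+εt) + y sin(θ+εt), −x sin(θ+εt) + y cos(θ+εt)) + (ε/2)(x²+y²) for any θ, ε ∈ ℝ; (d) ψ̃(t,x,y) = ψ(t, x−γ¹(t), y−γ²(t)) − γ¹'(t)y + γ²'(t)x for any smooth γ¹, γ²; (e) ψ̃(t,x,y) = ψ(t,x,y) + χ(t) for any smooth χ. -/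

import Mathlib

/-!
Statement 19: the differential function W(ψ) = (σ² + ς²)/(ζ_x² + ζ_y²), with
σ = ψ_xxx − 3ψ_xyy and ς = 3ψ_xxy − ψ_yyy, is a differential invariant of the
one-parameter symmetry groups generated by D₁, D₂, J + J^t, X(γ¹), Y(γ²) and Z(χ).
-/

noncomputable section

/-- Partial derivative with respect to t. -/
def dT (f : ℝ × ℝ × ℝ → ℝ) (p : ℝ × ℝ × ℝ) : ℝ := fderiv ℝ f p (1, 0, 0)
/-- Partial derivative with respect to x. -/
def dX (f : ℝ × ℝ × ℝ → ℝ) (p : ℝ × ℝ × ℝ) : ℝ := fderiv ℝ f p (0, 1, 0)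
/-- Partial derivative with respect to y. -/
def dY (f : ℝ × ℝ × ℝ → ℝ) (p : ℝ × ℝ × ℝ) : ℝ := fderiv ℝ f p (0, 0, 1)

/-- The vorticity ζ := ψ_xx + ψ_yy. -/
def vort (ψ : ℝ × ℝ × ℝ → ℝ) : ℝ × ℝ × ℝ → ℝ := fun p => dX (dX ψ) p + dY (dY ψ) p

/-- σ := ψ_xxx − 3 ψ_xyy. -/
def sig (ψ : ℝ × ℝ × ℝ → ℝ) (p : ℝ × ℝ × ℝ) : ℝ :=
  dX (dX (dX ψ)) p - 3 * dX (dY (dY ψ)) p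

/-- ς := 3 ψ_xxy − ψ_yyy. -/
def vsig (ψ : ℝ × ℝ × ℝ → ℝ) (p : ℝ × ℝ × ℝ) : ℝ :=
  3 * dY (dX (dX ψ)) p - dY (dY (dY ψ)) p

/-- The numerator σ² + ς². -/
def Wnum (ψ : ℝ × ℝ × ℝ → ℝ) (p : ℝ × ℝ × ℝ) : ℝ := (sig ψ p) ^ 2 + (vsig ψ p) ^ 2

/-- The denominator ζ_x² + ζ_y². -/
def Wden (ψ : ℝ × ℝ × ℝ → ℝ) (p : ℝ × ℝ × ℝ) : ℝ :=
  (dX (vort ψ) p) ^ 2 + (dY (vort ψ) p) ^ 2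

/-- W(ψ) = (σ² + ς²)/(ζ_x² + ζ_y²). -/
def W (ψ : ℝ × ℝ × ℝ → ℝ) (p : ℝ × ℝ × ℝ) : ℝ := Wnum ψ p / Wden ψ p


theorem cd_dX {f : ℝ × ℝ × ℝ → ℝ} (hf : ContDiff ℝ (⊤ : ℕ∞) f) : ContDiff ℝ (⊤ : ℕ∞) (dX f) := by
  have h : ContDiff ℝ (⊤ : ℕ∞) (fderiv ℝ f) := hf.fderiv_right (by simp)
  exact h.clm_apply contDiff_const

theorem cd_dY {f : ℝ × ℝ × ℝ → ℝ} (hf : ContDiff ℝ (⊤ : ℕ∞) f) : ContDiff ℝ (⊤ : ℕ∞) (dY f) := by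
  have h : ContDiff ℝ (⊤ : ℕ∞) (fderiv ℝ f) := hf.fderiv_right (by simp)
  exact h.clm_apply contDiff_const

theorem cd_diff {f : ℝ × ℝ × ℝ → ℝ} (hf : ContDiff ℝ (⊤ : ℕ∞) f) : Differentiable ℝ f :=
  hf.differentiable (by simp)

theorem dXY_comm {f : ℝ × ℝ × ℝ → ℝ} (hf : ContDiff ℝ (⊤ : ℕ∞) f) : dX (dY f) = dY (dX f) := by
  have h : ContDiff ℝ (⊤ : ℕ∞) (fderiv ℝ f) := hf.fderiv_right (by simp)
  have hd : Differentiable ℝ (fderiv ℝ f) := h.differentiable (by simp)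
  funext p
  have hs := second_derivative_symmetric (f := f) (f' := fderiv ℝ f) (x := p)
    (fun y => (cd_diff hf y).hasFDerivAt) (hd p).hasFDerivAt
  have key : ∀ v w : ℝ × ℝ × ℝ, fderiv ℝ (fun q => fderiv ℝ f q v) p w
      = fderiv ℝ (fderiv ℝ f) p w v := by
    intro v w
    have := ((hd p).hasFDerivAt.clm_apply (hasFDerivAt_const v p)).fderiv
    rw [this]; simp
  change fderiv ℝ (fun q => fderiv ℝ f q (0, 0, 1)) p (0, 1, 0)
    = fderiv ℝ (fun q => fderiv ℝ f q (0, 1, 0)) p (0, 0, 1)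
  rw [key, key]
  exact hs _ _

theorem line_deriv {f : ℝ × ℝ × ℝ → ℝ} (hf : ContDiff ℝ (⊤ : ℕ∞) f) (a α b β d s : ℝ) :
    HasDerivAt (fun s => f (a, α * s + b, β * s + d))
      (α * dX f (a, α * s + b, β * s + d) + β * dY f (a, α * s + b, β * s + d)) s := by
  have h1 : HasDerivAt (fun s : ℝ => ((a, α * s + b, β * s + d) : ℝ × ℝ × ℝ)) (0, α, β) s := by
    refine (hasDerivAt_const s a).prodMk (HasDerivAt.prodMk ?_ ?_)
    · simpa using ((hasDerivAt_id s).const_mul α).add_const b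
    · simpa using ((hasDerivAt_id s).const_mul β).add_const d
  have h2 := (cd_diff hf (a, α * s + b, β * s + d)).hasFDerivAt.comp_hasDerivAt s h1
  refine h2.congr_deriv ?_
  have : ((0, α, β) : ℝ × ℝ × ℝ) = α • (0, 1, 0) + β • (0, 0, 1) := by ext <;> simp
  rw [this, map_add, map_smul, map_smul]
  rfl

theorem dX_eq {F : ℝ × ℝ × ℝ → ℝ} (hF : ContDiff ℝ (⊤ : ℕ∞) F) (p : ℝ × ℝ × ℝ) {v : ℝ}
    (h : HasDerivAt (fun s => F (p.1, s, p.2.2)) v p.2.1) : dX F p = v := by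
  have := line_deriv hF p.1 1 0 0 p.2.2 p.2.1
  simp only [one_mul, add_zero, zero_mul, zero_add] at this
  exact this.unique h

theorem dY_eq {F : ℝ × ℝ × ℝ → ℝ} (hF : ContDiff ℝ (⊤ : ℕ∞) F) (p : ℝ × ℝ × ℝ) {v : ℝ}
    (h : HasDerivAt (fun s => F (p.1, p.2.1, s)) v p.2.2) : dY F p = v := by
  have := line_deriv hF p.1 0 p.2.1 1 0 p.2.2
  simp only [one_mul, add_zero, zero_mul, zero_add] at this
  exact this.unique h

theorem dX_add' {F G : ℝ × ℝ × ℝ → ℝ} (hF : ContDiff ℝ (⊤ : ℕ∞) F) (hG : ContDiff ℝ (⊤ : ℕ∞) G) :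
    dX (fun q => F q + G q) = fun q => dX F q + dX G q := by
  funext p
  simp only [dX]
  rw [fderiv_fun_add (cd_diff hF p) (cd_diff hG p)]; rfl

theorem dY_add' {F G : ℝ × ℝ × ℝ → ℝ} (hF : ContDiff ℝ (⊤ : ℕ∞) F) (hG : ContDiff ℝ (⊤ : ℕ∞) G) :
    dY (fun q => F q + G q) = fun q => dY F q + dY G q := by
  funext p
  simp only [dY]
  rw [fderiv_fun_add (cd_diff hF p) (cd_diff hG p)]; rfl

/-- quadratic remainder -/
def Rq (k l m : ℝ → ℝ) (n : ℝ) (q : ℝ × ℝ × ℝ) : ℝ :=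
  k q.1 + l q.1 * q.2.1 + m q.1 * q.2.2 + n * (q.2.1 ^ 2 + q.2.2 ^ 2)

theorem cd_Rq {k l m : ℝ → ℝ} (n : ℝ) (hk : ContDiff ℝ (⊤ : ℕ∞) k) (hl : ContDiff ℝ (⊤ : ℕ∞) l)
    (hm : ContDiff ℝ (⊤ : ℕ∞) m) : ContDiff ℝ (⊤ : ℕ∞) (Rq k l m n) := by
  unfold Rq; fun_prop

theorem dX_Rq {k l m : ℝ → ℝ} (n : ℝ) (hk : ContDiff ℝ (⊤ : ℕ∞) k) (hl : ContDiff ℝ (⊤ : ℕ∞) l)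
    (hm : ContDiff ℝ (⊤ : ℕ∞) m) :
    dX (Rq k l m n) = Rq l (fun _ => 2 * n) (fun _ => 0) 0 := by
  funext p
  apply dX_eq (cd_Rq n hk hl hm)
  unfold Rq
  have h := hasDerivAt_id p.2.1
  refine (((((h.const_mul (l p.1)).const_add (k p.1)).add_const (m p.1 * p.2.2)).add
    (((h.pow 2).add_const (p.2.2 ^ 2)).const_mul n))).congr_deriv ?_
  simp; ring

theorem dY_Rq {k l m : ℝ → ℝ} (n : ℝ) (hk : ContDiff ℝ (⊤ : ℕ∞) k) (hl : ContDiff ℝ (⊤ : ℕ∞) l)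
    (hm : ContDiff ℝ (⊤ : ℕ∞) m) :
    dY (Rq k l m n) = Rq m (fun _ => 0) (fun _ => 2 * n) 0 := by
  funext p
  apply dY_eq (cd_Rq n hk hl hm)
  unfold Rq
  have h := hasDerivAt_id p.2.2
  refine ((((h.const_mul (m p.1)).const_add (k p.1 + l p.1 * p.2.1)).add
    (((h.pow 2).const_add (p.2.1 ^ 2)).const_mul n))).congr_deriv ?_
  simp; ring

/-- weighted composition -/
def Cc (a A B g h : ℝ → ℝ) (u : ℝ → ℝ) (f : ℝ × ℝ × ℝ → ℝ) (q : ℝ × ℝ × ℝ) : ℝ :=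
  u q.1 * f (a q.1, A q.1 * q.2.1 + B q.1 * q.2.2 + g q.1,
    -B q.1 * q.2.1 + A q.1 * q.2.2 + h q.1)

section
variable {a A B g h : ℝ → ℝ} (ha : ContDiff ℝ (⊤ : ℕ∞) a) (hA : ContDiff ℝ (⊤ : ℕ∞) A)
  (hB : ContDiff ℝ (⊤ : ℕ∞) B) (hg : ContDiff ℝ (⊤ : ℕ∞) g) (hh : ContDiff ℝ (⊤ : ℕ∞) h)

theorem cd_Cc (ha : ContDiff ℝ (⊤ : ℕ∞) a) (hA : ContDiff ℝ (⊤ : ℕ∞) A)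
  (hB : ContDiff ℝ (⊤ : ℕ∞) B) (hg : ContDiff ℝ (⊤ : ℕ∞) g) (hh : ContDiff ℝ (⊤ : ℕ∞) h)
    {u : ℝ → ℝ} {f : ℝ × ℝ × ℝ → ℝ} (hu : ContDiff ℝ (⊤ : ℕ∞) u)
    (hf : ContDiff ℝ (⊤ : ℕ∞) f) : ContDiff ℝ (⊤ : ℕ∞) (Cc a A B g h u f) := by
  unfold Cc; fun_prop

theorem dX_Cc (ha : ContDiff ℝ (⊤ : ℕ∞) a) (hA : ContDiff ℝ (⊤ : ℕ∞) A)
  (hB : ContDiff ℝ (⊤ : ℕ∞) B) (hg : ContDiff ℝ (⊤ : ℕ∞) g) (hh : ContDiff ℝ (⊤ : ℕ∞) h)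
    {u : ℝ → ℝ} {f : ℝ × ℝ × ℝ → ℝ} (hu : ContDiff ℝ (⊤ : ℕ∞) u)
    (hf : ContDiff ℝ (⊤ : ℕ∞) f) : dX (Cc a A B g h u f) =
      fun q => Cc a A B g h (fun t => u t * A t) (dX f) q
        + Cc a A B g h (fun t => u t * -B t) (dY f) q := by
  funext p
  apply dX_eq (cd_Cc ha hA hB hg hh hu hf)
  unfold Cc
  have := (line_deriv hf (a p.1) (A p.1) (B p.1 * p.2.2 + g p.1) (-B p.1)
    (A p.1 * p.2.2 + h p.1) p.2.1).const_mul (u p.1)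
  simp only [← add_assoc] at this
  refine this.congr_deriv ?_
  ring

theorem dY_Cc (ha : ContDiff ℝ (⊤ : ℕ∞) a) (hA : ContDiff ℝ (⊤ : ℕ∞) A)
  (hB : ContDiff ℝ (⊤ : ℕ∞) B) (hg : ContDiff ℝ (⊤ : ℕ∞) g) (hh : ContDiff ℝ (⊤ : ℕ∞) h)
    {u : ℝ → ℝ} {f : ℝ × ℝ × ℝ → ℝ} (hu : ContDiff ℝ (⊤ : ℕ∞) u)
    (hf : ContDiff ℝ (⊤ : ℕ∞) f) : dY (Cc a A B g h u f) =
      fun q => Cc a A B g h (fun t => u t * B t) (dX f) q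
        + Cc a A B g h (fun t => u t * A t) (dY f) q := by
  funext p
  apply dY_eq (cd_Cc ha hA hB hg hh hu hf)
  unfold Cc
  have := (line_deriv hf (a p.1) (B p.1) (A p.1 * p.2.1 + g p.1) (A p.1)
    (-B p.1 * p.2.1 + h p.1) p.2.2).const_mul (u p.1)
  have e : ∀ s : ℝ, u p.1 * f (a p.1, B p.1 * s + (A p.1 * p.2.1 + g p.1),
      A p.1 * s + (-B p.1 * p.2.1 + h p.1)) = u p.1 * f (a p.1, A p.1 * p.2.1 + B p.1 * s + g p.1,
    -B p.1 * p.2.1 + A p.1 * s + h p.1) := by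
    intro s; congr 3
    congr 1 <;> ring
  have e1 : B p.1 * p.2.2 + (A p.1 * p.2.1 + g p.1) = A p.1 * p.2.1 + B p.1 * p.2.2 + g p.1 := by
    ring
  have e2 : A p.1 * p.2.2 + (-B p.1 * p.2.1 + h p.1) = -B p.1 * p.2.1 + A p.1 * p.2.2 + h p.1 := by
    ring
  simp only [e] at this
  rw [e1, e2] at this
  refine this.congr_deriv ?_
  ring

theorem W_general (ha : ContDiff ℝ (⊤ : ℕ∞) a) (hA : ContDiff ℝ (⊤ : ℕ∞) A)
    (hB : ContDiff ℝ (⊤ : ℕ∞) B) (hg : ContDiff ℝ (⊤ : ℕ∞) g) (hh : ContDiff ℝ (⊤ : ℕ∞) h)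
    {k l m : ℝ → ℝ} (n : ℝ) (hk : ContDiff ℝ (⊤ : ℕ∞) k) (hl : ContDiff ℝ (⊤ : ℕ∞) l)
    (hm : ContDiff ℝ (⊤ : ℕ∞) m) {f : ℝ × ℝ × ℝ → ℝ} (hf : ContDiff ℝ (⊤ : ℕ∞) f)
    (c : ℝ) (hc : c ≠ 0) (p : ℝ × ℝ × ℝ) (hAB : A p.1 ^ 2 + B p.1 ^ 2 ≠ 0) :
    W (fun q => Cc a A B g h (fun _ => c) f q + Rq k l m n q) p
      = W f (a p.1, A p.1 * p.2.1 + B p.1 * p.2.2 + g p.1,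
    -B p.1 * p.2.1 + A p.1 * p.2.2 + h p.1) := by
  have hx := cd_dX hf
  have hy := cd_dY hf
  have hxx := cd_dX hx
  have hxy := cd_dY hx
  have hyy := cd_dY hy
  have hxxx := cd_dX hxx
  have hxxy := cd_dY hxx
  have hxyy := cd_dY hxy
  have hyyy := cd_dY hyy
  have c0 : ContDiff ℝ (⊤ : ℕ∞) (fun _ : ℝ => (0 : ℝ)) := contDiff_const
  have cA : ∀ {u : ℝ → ℝ}, ContDiff ℝ (⊤ : ℕ∞) u → ContDiff ℝ (⊤ : ℕ∞) (fun t => u t * A t) :=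
    fun hu => hu.mul hA
  have cB : ∀ {u : ℝ → ℝ}, ContDiff ℝ (⊤ : ℕ∞) u → ContDiff ℝ (⊤ : ℕ∞) (fun t => u t * B t) :=
    fun hu => hu.mul hB
  have cB' : ∀ {u : ℝ → ℝ}, ContDiff ℝ (⊤ : ℕ∞) u → ContDiff ℝ (⊤ : ℕ∞) (fun t => u t * -B t) :=
    fun hu => hu.mul hB.neg
  have cc : ∀ {u : ℝ}, ContDiff ℝ (⊤ : ℕ∞) (fun _ : ℝ => u) := contDiff_const
  have cC : ∀ {u : ℝ → ℝ} {f : ℝ × ℝ × ℝ → ℝ}, ContDiff ℝ (⊤ : ℕ∞) u → ContDiff ℝ (⊤ : ℕ∞) f →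
    ContDiff ℝ (⊤ : ℕ∞) (Cc a A B g h u f) := fun hu hf => cd_Cc ha hA hB hg hh hu hf
  have cC' : ∀ {u : ℝ → ℝ} {f : ℝ × ℝ × ℝ → ℝ}, ContDiff ℝ (⊤ : ℕ∞) u → ContDiff ℝ (⊤ : ℕ∞) f →
    ContDiff ℝ (⊤ : ℕ∞) (fun q => Cc a A B g h u f q) := fun hu hf => cd_Cc ha hA hB hg hh hu hf
  have cR : ∀ {k l m : ℝ → ℝ} {n : ℝ}, ContDiff ℝ (⊤ : ℕ∞) k → ContDiff ℝ (⊤ : ℕ∞) l →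
    ContDiff ℝ (⊤ : ℕ∞) m → ContDiff ℝ (⊤ : ℕ∞) (fun q => Rq k l m n q) :=
    fun hk hl hm => cd_Rq _ hk hl hm
  have cadd : ∀ {F G : ℝ × ℝ × ℝ → ℝ}, ContDiff ℝ (⊤ : ℕ∞) F → ContDiff ℝ (⊤ : ℕ∞) G →
    ContDiff ℝ (⊤ : ℕ∞) (fun q => F q + G q) := fun hF hG => hF.add hG
  have X : ∀ {u : ℝ → ℝ} {f : ℝ × ℝ × ℝ → ℝ}, ContDiff ℝ (⊤ : ℕ∞) u → ContDiff ℝ (⊤ : ℕ∞) f →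
    _ := fun {u f} hu hf => dX_Cc (u := u) (f := f) ha hA hB hg hh hu hf
  have Y : ∀ {u : ℝ → ℝ} {f : ℝ × ℝ × ℝ → ℝ}, ContDiff ℝ (⊤ : ℕ∞) u → ContDiff ℝ (⊤ : ℕ∞) f →
    _ := fun {u f} hu hf => dY_Cc (u := u) (f := f) ha hA hB hg hh hu hf
  have v1 := dX_add' hxx hyy
  have v2 := dY_add' hxx hyy
  have s1 := dXY_comm hf
  have s2 := dXY_comm hx
  have s3 := dXY_comm hy
  have hv : ∀ F : ℝ × ℝ × ℝ → ℝ, vort F = fun p => dX (dX F) p + dY (dY F) p := fun _ => rfl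
  simp (maxDischargeDepth := 12) only [W, Wnum, Wden, sig, vsig, hv, dX_add', dY_add', X, Y, dX_Rq, dY_Rq, s1, s2, s3,
    cc, cA, cB, cB', cC, cC', cR, cadd, hx, hy, hxx, hxy, hyy, hf, hk, hl, hm, hxxx, hxxy, hxyy, hyyy, c0, v1, v2]
  simp only [Cc, Rq]
  generalize dX (dX (dX f)) _ = xxx
  generalize dY (dX (dX f)) _ = xxy
  generalize dY (dY (dX f)) _ = xyy
  generalize dY (dY (dY f)) _ = yyy
  have hK : c ^ 2 * (A p.1 ^ 2 + B p.1 ^ 2) ^ 3 ≠ 0 := by positivity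
  refine Eq.trans ?_ (mul_div_mul_left _ _ hK)
  congr 1 <;> ring
end

theorem W3_is_differential_invariant
    (ψ : ℝ × ℝ × ℝ → ℝ) (hψ : ContDiff ℝ (⊤ : ℕ∞) ψ) :
    -- (a) ψ̃(t,x,y) = e^{−ε} ψ(e^{−ε}t, x, y)
    (∀ ε : ℝ, ∀ p : ℝ × ℝ × ℝ,
      Wden ψ (Real.exp (-ε) * p.1, p.2.1, p.2.2) ≠ 0 →
      W (fun q => Real.exp (-ε) * ψ (Real.exp (-ε) * q.1, q.2.1, q.2.2)) p
        = W ψ (Real.exp (-ε) * p.1, p.2.1, p.2.2)) ∧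
    -- (b) ψ̃(t,x,y) = e^{2ε} ψ(t, e^{−ε}x, e^{−ε}y)
    (∀ ε : ℝ, ∀ p : ℝ × ℝ × ℝ,
      Wden ψ (p.1, Real.exp (-ε) * p.2.1, Real.exp (-ε) * p.2.2) ≠ 0 →
      W (fun q => Real.exp (2 * ε) * ψ (q.1, Real.exp (-ε) * q.2.1, Real.exp (-ε) * q.2.2)) p
        = W ψ (p.1, Real.exp (-ε) * p.2.1, Real.exp (-ε) * p.2.2)) ∧
    -- (c) rotation through angle θ + εt together with the ε/2 (x²+y²) shift
    (∀ θ ε : ℝ, ∀ p : ℝ × ℝ × ℝ,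
      Wden ψ (p.1, p.2.1 * Real.cos (θ + ε * p.1) + p.2.2 * Real.sin (θ + ε * p.1),
              -p.2.1 * Real.sin (θ + ε * p.1) + p.2.2 * Real.cos (θ + ε * p.1)) ≠ 0 →
      W (fun q => ψ (q.1, q.2.1 * Real.cos (θ + ε * q.1) + q.2.2 * Real.sin (θ + ε * q.1),
                     -q.2.1 * Real.sin (θ + ε * q.1) + q.2.2 * Real.cos (θ + ε * q.1))
          + ε / 2 * (q.2.1 ^ 2 + q.2.2 ^ 2)) p
        = W ψ (p.1, p.2.1 * Real.cos (θ + ε * p.1) + p.2.2 * Real.sin (θ + ε * p.1),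
               -p.2.1 * Real.sin (θ + ε * p.1) + p.2.2 * Real.cos (θ + ε * p.1))) ∧
    -- (d) generalized Galilean transformations
    (∀ γ1 γ2 : ℝ → ℝ, ContDiff ℝ (⊤ : ℕ∞) γ1 → ContDiff ℝ (⊤ : ℕ∞) γ2 → ∀ p : ℝ × ℝ × ℝ,
      Wden ψ (p.1, p.2.1 - γ1 p.1, p.2.2 - γ2 p.1) ≠ 0 →
      W (fun q => ψ (q.1, q.2.1 - γ1 q.1, q.2.2 - γ2 q.1)
          - deriv γ1 q.1 * q.2.2 + deriv γ2 q.1 * q.2.1) p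
        = W ψ (p.1, p.2.1 - γ1 p.1, p.2.2 - γ2 p.1)) ∧
    -- (e) shifts of ψ by functions of time
    (∀ χ : ℝ → ℝ, ContDiff ℝ (⊤ : ℕ∞) χ → ∀ p : ℝ × ℝ × ℝ,
      Wden ψ p ≠ 0 →
      W (fun q => ψ q + χ q.1) p = W ψ p) := by
  have c0 : ∀ u : ℝ, ContDiff ℝ (⊤ : ℕ∞) (fun _ : ℝ => u) := fun _ => contDiff_const
  have cid : ContDiff ℝ (⊤ : ℕ∞) (fun t : ℝ => t) := contDiff_id
  refine ⟨?_, ?_, ?_, ?_, ?_⟩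
  · intro ε p _
    have := W_general (a := fun t => Real.exp (-ε) * t) (by fun_prop) (c0 1) (c0 0) (c0 0) (c0 0)
      0 (c0 0) (c0 0) (c0 0) hψ (Real.exp (-ε)) (Real.exp_ne_zero _) p (by norm_num)
    simpa [Cc, Rq] using this
  · intro ε p _
    have := W_general cid (c0 (Real.exp (-ε))) (c0 0) (c0 0) (c0 0)
      0 (c0 0) (c0 0) (c0 0) hψ (Real.exp (2 * ε)) (Real.exp_ne_zero _) p (by positivity)
    simpa [Cc, Rq] using this
  · intro θ ε p _
    have := W_general (A := fun t => Real.cos (θ + ε * t)) (B := fun t => Real.sin (θ + ε * t))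
      cid (by fun_prop) (by fun_prop) (c0 0) (c0 0)
      (ε / 2) (c0 0) (c0 0) (c0 0) hψ 1 one_ne_zero p (by simp)
    simpa [Cc, Rq, mul_comm] using this
  · intro γ1 γ2 h1 h2 p _
    have d1 : ContDiff ℝ (⊤ : ℕ∞) (deriv γ1) := (contDiff_infty_iff_deriv.1 h1).2
    have d2 : ContDiff ℝ (⊤ : ℕ∞) (deriv γ2) := (contDiff_infty_iff_deriv.1 h2).2
    have := W_general cid (c0 1) (c0 0) h1.neg h2.neg
      0 (c0 0) d2 d1.neg hψ 1 one_ne_zero p (by norm_num)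
    have e : (fun q : ℝ × ℝ × ℝ => ψ (q.1, q.2.1 - γ1 q.1, q.2.2 - γ2 q.1)
          - deriv γ1 q.1 * q.2.2 + deriv γ2 q.1 * q.2.1) =
        fun q => Cc (fun t => t) (fun _ => 1) (fun _ => 0) (-γ1) (-γ2) (fun _ => 1) ψ q
          + Rq (fun _ => 0) (deriv γ2) (-deriv γ1) 0 q := by
      funext q
      simp [Cc, Rq, ← sub_eq_add_neg]
      ring
    rw [e]
    refine this.trans ?_
    simp [← sub_eq_add_neg]
  · intro χ hχ p _
    have := W_general cid (c0 1) (c0 0) (c0 0) (c0 0)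
      0 hχ (c0 0) (c0 0) hψ 1 one_ne_zero p (by norm_num)
    simpa [Cc, Rq] using this
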